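/- Let (X,τ) be a topological space and 𝒫 a primal on X such that τ is suitable for 𝒫. Then for every open set A of X and every B ⊆ X, (A ∩ B)⋄ = (A ∩ B⋄)⋄ = cl(A ∩ B⋄), where cl denotes closure in (X,τ). -/

import Mathlib

open Set

/-- A collection `P` of subsets of `X` is a *primal* on `X`. -/
structure IsSetPrimal {X : Type*} (P : Set (Set X)) : Prop where
  univ_not_mem : Set.univ ∉ P
  mem_of_subset : ∀ {A B : Set X}, A ∈ P → B ⊆ A → B ∈ P
  mem_or_mem_of_inter_mem : ∀ {A B : Set X}, A ∩ B ∈ P → A ∈ P ∨ B ∈ P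

/-- The primal-diamond operator: `A⋄ = {x | ∀ open U ∋ x, Aᶜ ∪ Uᶜ ∈ P}`. -/
def primalDiamond {X : Type*} [TopologicalSpace X] (P : Set (Set X)) (A : Set X) : Set X :=
  {x | ∀ U : Set X, IsOpen U → x ∈ U → Aᶜ ∪ Uᶜ ∈ P}

/-- The `Ψ` operator: `Ψ(A) = {x | ∃ open U ∋ x, (U \ A)ᶜ ∉ P}`. -/
def primalPsi {X : Type*} [TopologicalSpace X] (P : Set (Set X)) (A : Set X) : Set X :=
  {x | ∃ U : Set X, IsOpen U ∧ x ∈ U ∧ (U \ A)ᶜ ∉ P}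

/-- The topology is *suitable* for the primal `P` if `Aᶜ ∪ A⋄ ∉ P` for all `A`. -/
def SuitableForPrimal {X : Type*} [TopologicalSpace X] (P : Set (Set X)) : Prop :=
  ∀ A : Set X, Aᶜ ∪ primalDiamond P A ∉ P

/-!
The sets that do *not* belong to a primal `P` form a filter `F`. In terms of `F`, the set `A⋄`
consists of the points `x` such that `A` is met frequently along `𝓝 x ⊓ F`, and `τ` is suitable
for `P` when, for every `A`, `F`-almost every point of `A` lies in `A⋄`. Suitability therefore
lets one replace `B` by `B⋄` inside `(A ∩ B)⋄`, while an open set `A` is a neighbourhood of each of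
its points, so that `A ∩ B⋄ ⊆ (A ∩ B)⋄`. The latter set is closed, and `S⋄ ⊆ cl S` for every `S`,
which closes the chain `(A ∩ B)⋄ ⊆ (A ∩ B⋄)⋄ ⊆ cl (A ∩ B⋄) ⊆ (A ∩ B)⋄`.
-/

section PrimalDiamond

open Filter Topology

variable {X : Type*} {P : Set (Set X)}

/-- The filter dual to a primal `P`, whose members are the sets that do not belong to `P`. It is
the trivial filter `⊥` when `P` is empty. -/
def IsSetPrimal.dualFilter (hP : IsSetPrimal P) : Filter X where
  sets := Pᶜ
  univ_sets := hP.univ_not_mem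
  sets_of_superset hA hAB hB := hA (hP.mem_of_subset hB hAB)
  inter_sets hA hB hAB := (hP.mem_or_mem_of_inter_mem hAB).elim hA hB

theorem IsSetPrimal.mem_dualFilter (hP : IsSetPrimal P) {A : Set X} :
    A ∈ hP.dualFilter ↔ A ∉ P :=
  Iff.rfl

theorem IsSetPrimal.compl_mem_iff_frequently (hP : IsSetPrimal P) {A : Set X} :
    Aᶜ ∈ P ↔ ∃ᶠ y in hP.dualFilter, y ∈ A := by
  rw [← not_iff_not, ← hP.mem_dualFilter, not_frequently]
  rfl

variable [TopologicalSpace X]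

theorem isClosed_primalDiamond (P : Set (Set X)) (A : Set X) : IsClosed (primalDiamond P A) := by
  refine isClosed_of_closure_subset fun x hx U hU hxU => ?_
  obtain ⟨y, hyU, hy⟩ := mem_closure_iff.1 hx U hU hxU
  exact hy U hU hyU

theorem mem_primalDiamond_iff_frequently (hP : IsSetPrimal P) {A : Set X} {x : X} :
    x ∈ primalDiamond P A ↔ ∃ᶠ y in 𝓝 x ⊓ hP.dualFilter, y ∈ A := by
  calc x ∈ primalDiamond P A
    _ ↔ ∀ U : Set X, x ∈ U ∧ IsOpen U → ∃ᶠ y in hP.dualFilter, y ∈ A ∩ U := by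
      simp only [primalDiamond, mem_ofPred_eq, ← compl_inter, hP.compl_mem_iff_frequently,
        and_imp, @forall_comm (IsOpen _)]
    _ ↔ ClusterPt x (hP.dualFilter ⊓ 𝓟 A) := by
      simp only [(nhds_basis_opens x).clusterPt_iff_frequently, frequently_inf_principal,
        mem_inter_iff]
    _ ↔ ∃ᶠ y in 𝓝 x ⊓ hP.dualFilter, y ∈ A := by
      rw [frequently_mem_iff_neBot, inf_assoc, ClusterPt]

theorem primalDiamond_subset_of_eventually (hP : IsSetPrimal P) {A B : Set X}
    (h : ∀ᶠ y in hP.dualFilter, y ∈ A → y ∈ B) : primalDiamond P A ⊆ primalDiamond P B := by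
  intro x hx
  rw [mem_primalDiamond_iff_frequently hP] at hx ⊢
  exact hx.mp (h.filter_mono inf_le_right)

theorem primalDiamond_subset_closure (hP : IsSetPrimal P) (A : Set X) :
    primalDiamond P A ⊆ closure A := fun _ hx =>
  mem_closure_iff_frequently.2 <|
    ((mem_primalDiamond_iff_frequently hP).1 hx).filter_mono inf_le_left

theorem inter_primalDiamond_subset (hP : IsSetPrimal P) {A : Set X} (hA : IsOpen A)
    (B : Set X) : A ∩ primalDiamond P B ⊆ primalDiamond P (A ∩ B) := by
  rintro x ⟨hxA, hxB⟩
  rw [mem_primalDiamond_iff_frequently hP] at hxB ⊢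
  have eventually_mem : ∀ᶠ y in 𝓝 x ⊓ hP.dualFilter, y ∈ A :=
    (hA.eventually_mem hxA).filter_mono inf_le_left
  exact eventually_mem.and_frequently hxB

theorem SuitableForPrimal.eventually_mem_primalDiamond (hs : SuitableForPrimal P)
    (hP : IsSetPrimal P) (A : Set X) :
    ∀ᶠ y in hP.dualFilter, y ∈ A → y ∈ primalDiamond P A := by
  filter_upwards [hP.mem_dualFilter.2 (hs A)] with y hy hyA
  exact hy.resolve_left (not_not_intro hyA)

theorem SuitableForPrimal.primalDiamond_inter_subset (hs : SuitableForPrimal P)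
    (hP : IsSetPrimal P) (A B : Set X) :
    primalDiamond P (A ∩ B) ⊆ primalDiamond P (A ∩ primalDiamond P B) :=
  primalDiamond_subset_of_eventually hP <|
    (hs.eventually_mem_primalDiamond hP B).mono fun _ hB => And.imp_right hB

end PrimalDiamond

theorem stmt_19 {X : Type*} [TopologicalSpace X] (P : Set (Set X)) (hP : IsSetPrimal P)
    (hs : SuitableForPrimal P) (A B : Set X) (hA : IsOpen A) :
    primalDiamond P (A ∩ B) = primalDiamond P (A ∩ primalDiamond P B) ∧
    primalDiamond P (A ∩ B) = closure (A ∩ primalDiamond P B) := by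
  have diamond_subset := hs.primalDiamond_inter_subset hP A B
  have subset_closure := primalDiamond_subset_closure hP (A ∩ primalDiamond P B)
  have closure_subset : closure (A ∩ primalDiamond P B) ⊆ primalDiamond P (A ∩ B) :=
    closure_minimal (inter_primalDiamond_subset hP hA B) (isClosed_primalDiamond P (A ∩ B))
  exact ⟨diamond_subset.antisymm (subset_closure.trans closure_subset),
    (diamond_subset.trans subset_closure).antisymm closure_subset⟩
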